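/- Let X be a zero-dimensional, locally compact space which is not pseudocompact, with Banaschewski compactification bX, and let υX ⊆ bX be the copy of the N-compactification υ₀X of X inside bX. Then each of the subspaces bX ∖ υX and bX ∖ X contains a pairwise disjoint family of nonempty open subsets of cardinality 2^ℵ₀; in particular, the cellularity of each of these subspaces is at least 2^ℵ₀. -/

import Mathlib

/-!
A continuous unbounded function on `X` yields a disjoint, locally finite sequence of nonempty open
subsets of `X`. As `X` is open in `B`, these can be shrunk to clopen subsets `K n` of `B`. By local
finiteness, for every `S ⊆ ℕ` the union `⋃ n ∈ S, K n` is clopen in `X`, so it is the trace on `X`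
of a clopen subset `C S` of `B`.

* If `S` is infinite, then `C S ⊈ X`, since a compact set is not a disjoint union of infinitely many
  nonempty open sets.
* If `S ∩ T` is finite, then `C S ∩ C T ⊆ X`, since the trace of `C S ∩ C T` on the dense set `X` is
  the closed set `⋃ n ∈ S ∩ T, K n`.
* A point `p` of `C S ∖ X` is outside `υX`, as witnessed by its neighborhoods `C S ∖ K n`.

Letting `S` run through the branches of the binary tree, which are `2 ^ ℵ₀` infinite sets with
pairwise finite intersections, gives the required family in both remainders.
-/

open Set TopologicalSpace

universe u

/-- The copy of the `ℕ`-compactification `υ₀X` inside the Banaschewski compactification: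
points all of whose countable families of clopen neighborhoods have intersection meeting `X`. -/
def upsilon {B : Type*} [TopologicalSpace B] (X : Set B) : Set B :=
  {p | ∀ V : ℕ → Set B, (∀ n, IsClopen (V n) ∧ p ∈ V n) → ((⋂ n, V n) ∩ X).Nonempty}

section AlmostDisjoint

variable {α : Type*} [Encodable α]

/-- The branch of the tree of finite sequences in `α` determined by `a`: the set of the initial
segments of `a`, listed backwards by `PiNat.res` and encoded as natural numbers. Distinct branches
are almost disjoint. -/
def branch (a : ℕ → α) : Set ℕ :=
  range fun k => Encodable.encode (PiNat.res a k)

lemma infinite_branch (a : ℕ → α) : (branch a).Infinite := by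
  refine infinite_range_of_injective fun k l hkl => ?_
  simpa only [PiNat.res_length] using congrArg List.length (Encodable.encode_injective hkl)

lemma pairwise_finite_branch_inter :
    Pairwise fun a b : ℕ → α => (branch a ∩ branch b).Finite := by
  intro a b hab
  obtain ⟨i, hi⟩ := Function.ne_iff.1 hab
  refine ((finite_Iic i).image fun k => Encodable.encode (PiNat.res a k)).subset ?_
  rintro _ ⟨⟨k, rfl⟩, l, hl⟩
  have hres : PiNat.res b l = PiNat.res a k := Encodable.encode_injective hl
  obtain rfl : l = k := by simpa only [PiNat.res_length] using congrArg List.length hres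
  exact ⟨l, not_lt.1 fun hil => hi (PiNat.res_eq_res.1 hres hil).symm, rfl⟩

end AlmostDisjoint

section Unbounded

open Bornology Filter

variable {E : Type*} [PseudoMetricSpace E]

lemma locallyFinite_ball_of_tendsto_cobounded {ι : Type*} {a : ι → E}
    (ha : Tendsto a cofinite (cobounded E)) (r : ℝ) :
    LocallyFinite fun i => Metric.ball (a i) r := by
  intro y
  have hfin : {i | a i ∈ Metric.ball y (r + 1)}.Finite := by
    have hfar : (Metric.ball y (r + 1))ᶜ ∈ cobounded E :=
      isBounded_def.1 Metric.isBounded_ball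
    simpa only [mem_compl_iff, not_not] using eventually_cofinite.1 (ha hfar)
  refine ⟨Metric.ball y 1, Metric.ball_mem_nhds y one_pos, hfin.subset ?_⟩
  rintro i ⟨z, hzi, hzy⟩
  rw [Metric.mem_ball] at hzy
  rw [Metric.mem_ball'] at hzi
  exact Metric.mem_ball.2 (by linarith [dist_triangle (a i) z y])

lemma exists_seq_tendsto_cobounded_of_not_isBounded {s : Set E} (hs : ¬ IsBounded s)
    {r : ℝ} (hr : 0 < r) :
    ∃ a : ℕ → E, (∀ n, a n ∈ s) ∧ Tendsto a atTop (cobounded E) ∧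
      Pairwise fun m n => r ≤ dist (a m) (a n) := by
  obtain ⟨o, -⟩ : s.Nonempty := nonempty_iff_ne_empty.2 fun h => hs (h ▸ isBounded_empty)
  have hfar : ∀ M : ℝ, ∃ y ∈ s, M < dist y o := by
    by_contra! ⟨M, hM⟩
    exact hs (Metric.isBounded_closedBall.subset hM)
  obtain ⟨a, has, hgap⟩ := exists_seq_of_forall_finset_exists (· ∈ s)
    (fun y z => dist y o + r ≤ dist z o) fun t _ => by
      obtain ⟨M, hM⟩ := (t.image fun y => dist y o + r).bddAbove
      obtain ⟨z, hzs, hz⟩ := hfar M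
      exact ⟨z, hzs, fun y hy => (hM (Finset.mem_image_of_mem _ hy)).trans hz.le⟩
  have hgrow : ∀ n : ℕ, n * r ≤ dist (a n) o := by
    intro n
    induction n with
    | zero => simp
    | succ n ih =>
      push_cast
      linarith [hgap n (n + 1) n.lt_succ_self]
  have hsep : ∀ m n, m < n → r ≤ dist (a m) (a n) := fun m n hmn => by
    linarith [hgap m n hmn, dist_triangle_left (a n) o (a m)]
  refine ⟨a, has, ?_, fun m n hmn => ?_⟩
  · rw [← Metric.comap_dist_right_atTop o, tendsto_comap_iff]
    exact tendsto_atTop_mono hgrow (tendsto_natCast_atTop_atTop.atTop_mul_const hr)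
  · rcases hmn.lt_or_gt with h | h
    · exact hsep m n h
    · exact dist_comm (a n) (a m) ▸ hsep n m h

lemma exists_locallyFinite_disjoint_isOpen_seq {Z : Type*} [TopologicalSpace Z] {f : Z → E}
    (hf : Continuous f) (hunb : ¬ IsBounded (range f)) :
    ∃ U : ℕ → Set Z, (∀ n, IsOpen (U n)) ∧ (∀ n, (U n).Nonempty) ∧
      Pairwise (Function.onFun Disjoint U) ∧ LocallyFinite U := by
  obtain ⟨a, ha, hlim, hsep⟩ := exists_seq_tendsto_cobounded_of_not_isBounded hunb two_pos
  choose x hx using ha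
  rw [← Nat.cofinite_eq_atTop] at hlim
  refine ⟨fun n => f ⁻¹' Metric.ball (a n) 1, fun n => Metric.isOpen_ball.preimage hf,
    fun n => ⟨x n, by simp [hx]⟩, fun m n hmn => ?_,
    (locallyFinite_ball_of_tendsto_cobounded hlim 1).preimage_continuous hf⟩
  exact (Metric.ball_disjoint_ball (one_add_one_eq_two.trans_le (hsep hmn))).preimage f

end Unbounded

section Subspace

variable {B : Type*} [TopologicalSpace B] {X : Set B}

lemma isOpen_of_dense_of_weaklyLocallyCompactSpace [T2Space B] [WeaklyLocallyCompactSpace X]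
    (hd : Dense X) : IsOpen X := by
  refine isOpen_iff_mem_nhds.2 fun x hx => ?_
  obtain ⟨N, hN, hxN⟩ := exists_compact_mem_nhds (⟨x, hx⟩ : X)
  obtain ⟨O, hxO, hO, hON⟩ : ∃ O, x ∈ O ∧ IsOpen O ∧ O ∩ X ⊆ Subtype.val '' N := by
    obtain ⟨U, hU, hUN⟩ := (mem_nhds_subtype X ⟨x, hx⟩ N).1 hxN
    obtain ⟨O, hOU, hO, hxO⟩ := mem_nhds_iff.1 hU
    exact ⟨O, hxO, hO, fun y hy => ⟨⟨y, hy.2⟩, hUN (hOU hy.1), rfl⟩⟩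
  have hON' : O ⊆ Subtype.val '' N := (hd.open_subset_closure_inter hO).trans
    (closure_minimal hON (hN.image continuous_subtype_val).isClosed)
  exact Filter.mem_of_superset (hO.mem_nhds hxO) (hON'.trans (Subtype.coe_image_subset X N))

lemma subset_of_isOpen_of_isClosed_inter (hd : Dense X) {U : Set B} (hU : IsOpen U)
    (hUX : IsClosed (X ∩ U)) : U ⊆ X :=
  calc U ⊆ closure (U ∩ X) := hd.open_subset_closure_inter hU
    _ = X ∩ U := by rw [inter_comm, hUX.closure_eq]
    _ ⊆ X := inter_subset_left

lemma exists_isClopen_preimage_val_eq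
    (hext : ∀ g : X → Bool, Continuous g → ∃ G : B → Bool, Continuous G ∧ ∀ x : X, G x = g x)
    {A : Set X} (hA : IsClopen A) : ∃ C : Set B, IsClopen C ∧ Subtype.val ⁻¹' C = A := by
  obtain ⟨G, hG, hGA⟩ := hext A.boolIndicator ((continuous_boolIndicator_iff_isClopen A).2 hA)
  refine ⟨G ⁻¹' {true}, (isClopen_discrete _).preimage hG, ?_⟩
  rw [← A.preimage_boolIndicator_true, ← funext hGA]
  rfl

lemma exists_isClopen_nonempty_subset_image
    (hB : IsTopologicalBasis {s : Set B | IsClopen s}) (hX : IsOpen X) {U : Set X} (hU : IsOpen U)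
    (hne : U.Nonempty) : ∃ K : Set B, IsClopen K ∧ K.Nonempty ∧ K ⊆ Subtype.val '' U := by
  obtain ⟨x, hx⟩ := hne
  obtain ⟨K, hK, hxK, hKU⟩ := hB.exists_subset_of_mem_open (mem_image_of_mem Subtype.val hx)
    (hX.isOpenMap_subtype_val _ hU)
  exact ⟨K, hK, ⟨x, hxK⟩, hKU⟩

lemma subset_upsilon : X ⊆ upsilon X :=
  fun p hp _ hV => ⟨p, mem_iInter.2 fun n => (hV n).2, hp⟩

lemma notMem_upsilon_of_inter_subset_iUnion {K : ℕ → Set B} (hK : ∀ n, IsClopen (K n)) {C : Set B}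
    (hC : IsClopen C) (hCX : X ∩ C ⊆ ⋃ n, K n) {p : B} (hpC : p ∈ C) (hpK : ∀ n, p ∉ K n) :
    p ∉ upsilon X := by
  intro hp
  obtain ⟨y, hy, hyX⟩ := hp (fun n => C \ K n) fun n => ⟨hC.diff (hK n), hpC, hpK n⟩
  rw [mem_iInter] at hy
  obtain ⟨n, hn⟩ := mem_iUnion.1 (hCX ⟨hyX, (hy 0).1⟩)
  exact (hy n).2 hn

end Subspace

section Traces

variable {B : Type*} [TopologicalSpace B] {X : Set B} {ι : Type*} {K : ι → Set B}

lemma exists_disjoint_isClopen_seq (hB : IsTopologicalBasis {s : Set B | IsClopen s})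
    (hX : IsOpen X) {E : Type*} [PseudoMetricSpace E] {f : X → E} (hf : Continuous f)
    (hunb : ¬ Bornology.IsBounded (range f)) :
    ∃ K : ℕ → Set B, (∀ n, IsClopen (K n)) ∧ (∀ n, (K n).Nonempty) ∧ (∀ n, K n ⊆ X) ∧
      Pairwise (Function.onFun Disjoint K) ∧
      LocallyFinite fun n => (Subtype.val ⁻¹' K n : Set X) := by
  obtain ⟨U, hU, hne, hdisj, hfin⟩ := exists_locallyFinite_disjoint_isOpen_seq hf hunb
  choose K hK hKne hKU using fun n => exists_isClopen_nonempty_subset_image hB hX (hU n) (hne n)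
  refine ⟨K, hK, hKne, fun n => (hKU n).trans (Subtype.coe_image_subset X _),
    fun m n hmn => ?_, hfin.subset fun n => ?_⟩
  · exact (disjoint_image_of_injective Subtype.val_injective (hdisj hmn)).mono (hKU m) (hKU n)
  · exact (preimage_mono (hKU n)).trans (preimage_image_eq (U n) Subtype.val_injective).subset

lemma exists_isClopen_inter_eq_biUnion
    (hext : ∀ g : X → Bool, Continuous g → ∃ G : B → Bool, Continuous G ∧ ∀ x : X, G x = g x)
    (hK : ∀ i, IsClopen (K i)) (hKX : ∀ i, K i ⊆ X)
    (hfin : LocallyFinite fun i => (Subtype.val ⁻¹' K i : Set X)) (S : Set ι) :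
    ∃ C : Set B, IsClopen C ∧ X ∩ C = ⋃ i ∈ S, K i := by
  have hKS : ∀ i : S, IsClopen (Subtype.val ⁻¹' K i : Set X) := fun i =>
    (hK i).preimage continuous_subtype_val
  have hclopen : IsClopen (⋃ i : S, (Subtype.val ⁻¹' K i : Set X)) :=
    ⟨(hfin.comp_injective Subtype.val_injective).isClosed_iUnion fun i => (hKS i).isClosed,
      isOpen_iUnion fun i => (hKS i).isOpen⟩
  obtain ⟨C, hC, hCK⟩ := exists_isClopen_preimage_val_eq hext hclopen
  refine ⟨C, hC, ?_⟩
  rw [← preimage_iUnion, Subtype.preimage_coe_eq_preimage_coe_iff] at hCK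
  rw [hCK, inter_eq_right.2 (iUnion_subset fun i : S => hKX i), iUnion_subtype]

lemma finite_of_isCompact_biUnion {S : Set ι} (hK : ∀ i ∈ S, IsOpen (K i))
    (hne : ∀ i ∈ S, (K i).Nonempty) (hdisj : S.PairwiseDisjoint K)
    (hc : IsCompact (⋃ i ∈ S, K i)) : S.Finite := by
  obtain ⟨T, hTS, hT, hcover⟩ := hc.elim_finite_subcover_image hK Subset.rfl
  refine hT.subset fun i hi => ?_
  obtain ⟨y, hy⟩ := hne i hi
  obtain ⟨j, hj, hyj⟩ := mem_iUnion₂.1 (hcover (mem_biUnion hi hy))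
  rwa [hdisj.elim_set hi (hTS hj) y hy hyj]

lemma sdiff_nonempty_of_infinite {S : Set ι} (hS : S.Infinite) (hK : ∀ i ∈ S, IsOpen (K i))
    (hne : ∀ i ∈ S, (K i).Nonempty) (hdisj : S.PairwiseDisjoint K) {C : Set B}
    (hC : IsCompact C) (hCX : X ∩ C = ⋃ i ∈ S, K i) : (C \ X).Nonempty := by
  refine sdiff_nonempty.2 fun hCX' => hS (finite_of_isCompact_biUnion hK hne hdisj ?_)
  rwa [← hCX, inter_eq_right.2 hCX']

lemma inter_subset_of_finite_inter (hd : Dense X) (hK : ∀ i, IsClosed (K i))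
    (hdisj : Pairwise (Function.onFun Disjoint K)) {S T : Set ι} (hST : (S ∩ T).Finite)
    {C D : Set B} (hC : IsOpen C) (hD : IsOpen D) (hCX : X ∩ C = ⋃ i ∈ S, K i)
    (hDX : X ∩ D = ⋃ i ∈ T, K i) : C ∩ D ⊆ X := by
  refine subset_of_isOpen_of_isClosed_inter hd (hC.inter hD) ?_
  rw [inter_inter_distrib_left, hCX, hDX, ← biUnion_inter_of_pairwise_disjoint hdisj]
  exact hST.isClosed_biUnion fun i _ => hK i

lemma exists_isClopen_family_of_almostDisjoint [CompactSpace B]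
    (hB : IsTopologicalBasis {s : Set B | IsClopen s}) (hX : IsOpen X) (hd : Dense X)
    (hext : ∀ g : X → Bool, Continuous g → ∃ G : B → Bool, Continuous G ∧ ∀ x : X, G x = g x)
    {E : Type*} [PseudoMetricSpace E] {f : X → E} (hf : Continuous f)
    (hunb : ¬ Bornology.IsBounded (range f)) {A : ι → Set ℕ} (hA : ∀ i, (A i).Infinite)
    (hAA : Pairwise fun i j => (A i ∩ A j).Finite) :
    ∃ C : ι → Set B, (∀ i, IsClopen (C i)) ∧ (∀ i, (C i \ X).Nonempty) ∧
      (Pairwise fun i j => C i ∩ C j ⊆ X) ∧ ∀ i, C i \ X ⊆ (upsilon X)ᶜ := by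
  obtain ⟨K, hK, hKne, hKX, hKdisj, hKfin⟩ := exists_disjoint_isClopen_seq hB hX hf hunb
  choose C hC hCX using fun i => exists_isClopen_inter_eq_biUnion hext hK hKX hKfin (A i)
  refine ⟨C, hC, fun i => ?_, fun i j hij => ?_, fun i p hp => ?_⟩
  · exact sdiff_nonempty_of_infinite (hA i) (fun n _ => (hK n).isOpen) (fun n _ => hKne n)
      (hKdisj.set_pairwise _) (hC i).isClosed.isCompact (hCX i)
  · exact inter_subset_of_finite_inter hd (fun n => (hK n).isClosed) hKdisj (hAA hij)
      (hC i).isOpen (hC j).isOpen (hCX i) (hCX j)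
  · exact notMem_upsilon_of_inter_subset_iUnion hK (hC i)
      ((hCX i).trans_subset (iUnion₂_subset_iUnion _ _)) hp.1 fun n hn => hp.2 (hKX n hn)

end Traces

lemma injective_of_pairwise_disjoint_of_nonempty {ι α : Type*} {V : ι → Set α}
    (hdisj : Pairwise (Function.onFun Disjoint V)) (hne : ∀ i, (V i).Nonempty) :
    Function.Injective V :=
  fun i _ hij => hdisj.eq fun h => (hne i).ne_empty (disjoint_self.1 (h.mono_right hij.le))

universe v

lemma exists_disjoint_isOpen_family_mk_ge {B : Type u} [TopologicalSpace B] {Y : Set B}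
    {ι : Type v} {C : ι → Set B} (hC : ∀ i, IsOpen (C i)) (hne : ∀ i, (C i ∩ Y).Nonempty)
    (hdisj : Pairwise fun i j => Disjoint (C i ∩ C j) Y) :
    ∃ 𝒰 : Set (Set Y), (∀ V ∈ 𝒰, IsOpen V ∧ V.Nonempty) ∧ 𝒰.PairwiseDisjoint id ∧
      Cardinal.lift.{u} (Cardinal.mk ι) ≤ Cardinal.lift.{v} (Cardinal.mk 𝒰) := by
  let V : ι → Set Y := fun i => Subtype.val ⁻¹' C i
  have hVne : ∀ i, (V i).Nonempty := fun i =>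
    let ⟨y, hyC, hyY⟩ := hne i
    ⟨⟨y, hyY⟩, hyC⟩
  have hV : Pairwise (Function.onFun Disjoint V) := fun i j hij =>
    disjoint_left.2 fun y hyi hyj => disjoint_left.1 (hdisj hij) ⟨hyi, hyj⟩ y.2
  refine ⟨range V, ?_, Pairwise.range_pairwise hV, ?_⟩
  · rintro _ ⟨i, rfl⟩
    exact ⟨(hC i).preimage continuous_subtype_val, hVne i⟩
  · exact (Cardinal.mk_range_eq_of_injective
      (injective_of_pairwise_disjoint_of_nonempty hV hVne)).ge

/-- If `X` is zero-dimensional, locally compact and not pseudocompact, then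
both `B ∖ υX` and `B ∖ X` contain a pairwise disjoint family of nonempty open sets of
cardinality `2 ^ ℵ₀`; in particular their cellularity is at least `2 ^ ℵ₀`. -/
theorem stmt_19 {B : Type u} [TopologicalSpace B] [CompactSpace B] [T2Space B]
    (hB : IsTopologicalBasis {s : Set B | IsClopen s})
    (X : Set B) (hd : Dense X)
    (hext : ∀ g : X → Bool, Continuous g → ∃ G : B → Bool, Continuous G ∧ ∀ x : X, G x = g x)
    (hlc : LocallyCompactSpace X)
    (hnp : ¬ ∀ f : X → ℝ, Continuous f → ∃ M : ℝ, ∀ x, |f x| ≤ M) :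
    (∃ 𝒰 : Set (Set ((upsilon X)ᶜ : Set B)), (∀ V ∈ 𝒰, IsOpen V ∧ V.Nonempty) ∧
        𝒰.PairwiseDisjoint id ∧ (2 : Cardinal) ^ Cardinal.aleph0 ≤ Cardinal.mk 𝒰) ∧
    (∃ 𝒰 : Set (Set (Xᶜ : Set B)), (∀ V ∈ 𝒰, IsOpen V ∧ V.Nonempty) ∧
        𝒰.PairwiseDisjoint id ∧ (2 : Cardinal) ^ Cardinal.aleph0 ≤ Cardinal.mk 𝒰) := by
  have hX : IsOpen X := isOpen_of_dense_of_weaklyLocallyCompactSpace hd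
  obtain ⟨f, hf, hunb⟩ : ∃ f : X → ℝ, Continuous f ∧ ¬ Bornology.IsBounded (range f) := by
    simpa only [isBounded_iff_forall_norm_le, forall_mem_range, Real.norm_eq_abs, not_forall,
      exists_prop] using hnp
  obtain ⟨C, hC, hne, hinter, hout⟩ := exists_isClopen_family_of_almostDisjoint hB hX hd hext hf
    hunb (infinite_branch (α := Bool)) pairwise_finite_branch_inter
  have hopen : ∀ a, IsOpen (C a) := fun a => (hC a).isOpen
  constructor
  · simpa using exists_disjoint_isOpen_family_mk_ge hopen
      (fun a => (hne a).mono (subset_inter sdiff_subset (hout a)))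
      fun a b hab => disjoint_compl_right_iff_subset.2 ((hinter hab).trans subset_upsilon)
  · simpa using exists_disjoint_isOpen_family_mk_ge (Y := Xᶜ) hopen hne
      fun a b hab => disjoint_compl_right_iff_subset.2 (hinter hab)
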